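/- (Single-pair Type-II bound of the conf-score framework.) Let Y be a random vector in ℝ^d with mean μ and positive definite covariance matrix A (with positive definite square root A^{1/2}), and let X be a random vector independent of Y with mean μ_u, positive semidefinite covariance matrix A_u, and finite second moment. Set Δ_μ = |A^{-1/2}(μ_u - μ)| and Δ_A = A^{-1/2} A_u A^{-1/2} + I, and let Δ_A^{1/2} be the positive semidefinite square root of Δ_A. Then for every δ with 0 < δ < Δ_μ, P( |A^{-1/2}(X - Y)| < δ ) ≤ d ‖Δ_A^{1/2}‖^2 / (Δ_μ - δ)^2. -/

import Mathlib

/-!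
Put `W = S⁻¹ (X - Y)` and `m = S⁻¹ (μu - μ) = E[W]`. On the event `|W| < δ` the triangle inequality
gives `|W - m| ≥ |m| - δ > 0`, so by Markov's inequality applied to `|W - m|²` its probability is
at most `E|W - m|² / (|m| - δ)²`. By independence the covariance of `X - Y` is `Au + A`, hence
`E|W - m|² = tr (S⁻¹ (Au + A) S⁻¹) = tr (T * T)` because `S⁻¹ A S⁻¹ = 1`. As `T` is symmetric, this
trace is the sum of the squared lengths of the columns of `T`, each of which is at most `‖T‖²`.
-/

open MeasureTheory ProbabilityTheory

/-- The Euclidean norm on `ℝ^d` (as `Fin d → ℝ`). -/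
noncomputable def euclNorm {d : ℕ} (v : Fin d → ℝ) : ℝ := Real.sqrt (∑ i, v i ^ 2)

/-- The `ℓ²`-operator norm of a `d × d` real matrix: `‖B‖ = sup_{|v| ≤ 1} |B v|`. -/
noncomputable def matOpNorm {d : ℕ} (B : Matrix (Fin d) (Fin d) ℝ) : ℝ :=
  sSup {r : ℝ | ∃ v : Fin d → ℝ, euclNorm v ≤ 1 ∧ r = euclNorm (B.mulVec v)}

theorem euclNorm_sq {d : ℕ} (v : Fin d → ℝ) : euclNorm v ^ 2 = ∑ i, v i ^ 2 :=
  Real.sq_sqrt (Finset.sum_nonneg fun _ _ => sq_nonneg _)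

theorem euclNorm_nonneg {d : ℕ} (v : Fin d → ℝ) : 0 ≤ euclNorm v := Real.sqrt_nonneg _

theorem euclNorm_eq_norm {d : ℕ} (v : Fin d → ℝ) :
    euclNorm v = ‖(WithLp.toLp 2 v : EuclideanSpace ℝ (Fin d))‖ := by
  simp [euclNorm, EuclideanSpace.norm_eq]

theorem euclNorm_sub_le {d : ℕ} (v w : Fin d → ℝ) :
    euclNorm v - euclNorm w ≤ euclNorm (w - v) := by
  simp only [euclNorm_eq_norm, WithLp.toLp_sub]
  rw [norm_sub_rev]
  exact norm_sub_norm_le _ _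

/-- The set defining `matOpNorm B` is bounded, by the Frobenius norm of `B`; without this its
`sSup` would be a junk value. -/
theorem euclNorm_mulVec_le_matOpNorm {d : ℕ} (B : Matrix (Fin d) (Fin d) ℝ) (v : Fin d → ℝ)
    (hv : euclNorm v ≤ 1) : euclNorm (B.mulVec v) ≤ matOpNorm B := by
  refine le_csSup ⟨Real.sqrt (∑ i, ∑ j, B i j ^ 2), ?_⟩ ⟨v, hv, rfl⟩
  rintro r ⟨w, hw, rfl⟩
  refine Real.sqrt_le_sqrt (Finset.sum_le_sum fun i _ => ?_)
  have h1 : ∑ j, w j ^ 2 ≤ 1 := by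
    rw [← euclNorm_sq]
    exact pow_le_one₀ (euclNorm_nonneg w) hw
  calc (B.mulVec w i) ^ 2 ≤ (∑ j, B i j ^ 2) * ∑ j, w j ^ 2 :=
        Finset.sum_mul_sq_le_sq_mul_sq Finset.univ (fun j => B i j) w
    _ ≤ ∑ j, B i j ^ 2 :=
        mul_le_of_le_one_right (Finset.sum_nonneg fun _ _ => sq_nonneg _) h1

/-- The squared Frobenius norm is at most `d` times the squared operator norm: each column of `B`
is the image of a unit vector. -/
theorem sum_sq_le_matOpNorm {d : ℕ} (B : Matrix (Fin d) (Fin d) ℝ) :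
    ∑ i, ∑ j, B i j ^ 2 ≤ d * matOpNorm B ^ 2 := by
  rw [Finset.sum_comm]
  have h : ∀ j, ∑ i, B i j ^ 2 ≤ matOpNorm B ^ 2 := by
    intro j
    have h1 := euclNorm_mulVec_le_matOpNorm B (Pi.single j 1)
      (by simp [euclNorm, Pi.single_apply])
    have h2 := pow_le_pow_left₀ (euclNorm_nonneg _) h1 2
    rw [euclNorm_sq] at h2
    simpa using h2
  calc ∑ j, ∑ i, B i j ^ 2 ≤ ∑ _j : Fin d, matOpNorm B ^ 2 := Finset.sum_le_sum fun j _ => h j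
    _ = d * matOpNorm B ^ 2 := by simp

/-- The covariance of a difference of independent vectors is the sum of the covariances; stated for
two centred coordinates of each vector. -/
theorem integral_sub_mul_sub {Ω : Type*} [MeasurableSpace Ω] (P : Measure Ω)
    (x x' y y' : Ω → ℝ) (hx : Integrable x P) (hx' : Integrable x' P)
    (hy : Integrable y P) (hy' : Integrable y' P)
    (hxx : Integrable (fun ω => x ω * x' ω) P) (hyy : Integrable (fun ω => y ω * y' ω) P)
    (h1 : IndepFun x y' P) (h2 : IndepFun y x' P)
    (mx : ∫ ω, x ω ∂P = 0) (my : ∫ ω, y ω ∂P = 0) :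
    Integrable (fun ω => (x ω - y ω) * (x' ω - y' ω)) P ∧
    ∫ ω, (x ω - y ω) * (x' ω - y' ω) ∂P = ∫ ω, x ω * x' ω ∂P + ∫ ω, y ω * y' ω ∂P := by
  have i1 : Integrable (fun ω => x ω * y' ω) P := h1.integrable_mul hx hy'
  have i2 : Integrable (fun ω => y ω * x' ω) P := h2.integrable_mul hy hx'
  have e1 : ∫ ω, x ω * y' ω ∂P = 0 := by
    rw [h1.integral_fun_mul_eq_mul_integral hx.1 hy'.1, mx, zero_mul]
  have e2 : ∫ ω, y ω * x' ω ∂P = 0 := by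
    rw [h2.integral_fun_mul_eq_mul_integral hy.1 hx'.1, my, zero_mul]
  have e : (fun ω => (x ω - y ω) * (x' ω - y' ω)) =
      fun ω => (x ω * x' ω + y ω * y' ω) - (x ω * y' ω + y ω * x' ω) := by
    funext ω; ring
  have ia : Integrable (fun ω => x ω * x' ω + y ω * y' ω) P := hxx.add hyy
  have ib : Integrable (fun ω => x ω * y' ω + y ω * x' ω) P := i1.add i2
  rw [e]
  refine ⟨ia.sub ib, ?_⟩
  rw [integral_sub ia ib, integral_add hxx hyy, integral_add i1 i2, e1, e2]
  ring

/-- `E|B V|² = tr (B C Bᵀ)` when `C` is the matrix of second moments of `V`. -/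
theorem integral_euclNorm_mulVec_sq {d : ℕ} {Ω : Type*} [MeasurableSpace Ω] (P : Measure Ω)
    (V : Ω → Fin d → ℝ) (B C : Matrix (Fin d) (Fin d) ℝ)
    (hV : ∀ i j, Integrable (fun ω => V ω i * V ω j) P)
    (hC : ∀ i j, ∫ ω, V ω i * V ω j ∂P = C i j) :
    Integrable (fun ω => euclNorm (B.mulVec (V ω)) ^ 2) P ∧
    ∫ ω, euclNorm (B.mulVec (V ω)) ^ 2 ∂P = (B * C * B.transpose).trace := by
  have e : (fun ω => euclNorm (B.mulVec (V ω)) ^ 2) =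
      fun ω => ∑ i, ∑ k, ∑ j, (B i j * B i k) * (V ω j * V ω k) := by
    funext ω
    rw [euclNorm_sq]
    refine Finset.sum_congr rfl fun i _ => ?_
    simp only [Matrix.mulVec, dotProduct, sq, Finset.sum_mul_sum]
    rw [Finset.sum_comm]
    refine Finset.sum_congr rfl fun k _ => Finset.sum_congr rfl fun j _ => by ring
  have hi : ∀ i k j, Integrable (fun ω => (B i j * B i k) * (V ω j * V ω k)) P :=
    fun i k j => (hV j k).const_mul _
  have hi2 : ∀ i k, Integrable (fun ω => ∑ j, (B i j * B i k) * (V ω j * V ω k)) P :=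
    fun i k => integrable_finsetSum _ fun j _ => hi i k j
  have hi1 : ∀ i, Integrable (fun ω => ∑ k, ∑ j, (B i j * B i k) * (V ω j * V ω k)) P :=
    fun i => integrable_finsetSum _ fun k _ => hi2 i k
  rw [e]
  refine ⟨integrable_finsetSum _ fun i _ => hi1 i, ?_⟩
  rw [integral_finsetSum _ fun i _ => hi1 i, Matrix.trace]
  refine Finset.sum_congr rfl fun i _ => ?_
  rw [integral_finsetSum _ fun k _ => hi2 i k, Matrix.diag_apply, Matrix.mul_apply]
  refine Finset.sum_congr rfl fun k _ => ?_
  rw [integral_finsetSum _ fun j _ => hi i k j, Matrix.mul_apply, Finset.sum_mul]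
  refine Finset.sum_congr rfl fun j _ => ?_
  rw [integral_const_mul, hC, Matrix.transpose_apply]
  ring

/-- Single-pair Type-II bound of the conf-score framework: let `Y` be
a random vector with mean `μ` and positive definite covariance `A` (with positive
definite square root `S`), and `X` independent of `Y` with mean `μu` and positive
semidefinite covariance `Au`. With `Δμ = |A^{-1/2}(μu - μ)|`,
`ΔA = A^{-1/2} Au A^{-1/2} + I` with positive semidefinite square root `T`, and
`0 < δ < Δμ`, one has `P(|A^{-1/2}(X - Y)| < δ) ≤ d ‖T‖² / (Δμ - δ)²`. -/
theorem confScore_single_pair_typeII_bound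
    {d : ℕ} {Ω : Type*} [MeasurableSpace Ω] (P : Measure Ω) [IsProbabilityMeasure P]
    (X Y : Ω → Fin d → ℝ) (hX : Measurable X) (hY : Measurable Y)
    (hIndep : IndepFun X Y P)
    (hX1 : ∀ i, Integrable (fun ω => X ω i) P)
    (hX2 : ∀ i j, Integrable (fun ω => X ω i * X ω j) P)
    (hY1 : ∀ i, Integrable (fun ω => Y ω i) P)
    (hY2 : ∀ i j, Integrable (fun ω => Y ω i * Y ω j) P)
    (μ : Fin d → ℝ) (hYμ : ∀ i, ∫ ω, Y ω i ∂P = μ i)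
    (A : Matrix (Fin d) (Fin d) ℝ)
    (hA : ∀ i j, A i j = ∫ ω, (Y ω i - μ i) * (Y ω j - μ j) ∂P)
    (hApos : A.PosDef)
    (S : Matrix (Fin d) (Fin d) ℝ) (hS : S.PosDef) (hSA : S * S = A)
    (μu : Fin d → ℝ) (hXμ : ∀ i, ∫ ω, X ω i ∂P = μu i)
    (Au : Matrix (Fin d) (Fin d) ℝ)
    (hAu : ∀ i j, Au i j = ∫ ω, (X ω i - μu i) * (X ω j - μu j) ∂P)
    (hAupsd : Au.PosSemidef)
    (T : Matrix (Fin d) (Fin d) ℝ) (hT : T.PosSemidef)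
    (hTT : T * T = S⁻¹ * Au * S⁻¹ + 1)
    (δ : ℝ) (hδ0 : 0 < δ) (hδ1 : δ < euclNorm (S⁻¹.mulVec (μu - μ))) :
    P {ω | euclNorm (S⁻¹.mulVec (X ω - Y ω)) < δ}
      ≤ ENNReal.ofReal (d * matOpNorm T ^ 2
          / (euclNorm (S⁻¹.mulVec (μu - μ)) - δ) ^ 2) := by
  set m := S⁻¹.mulVec (μu - μ) with hm
  set V : Ω → Fin d → ℝ := fun ω i => (X ω i - μu i) - (Y ω i - μ i) with hVdef
  have cX : ∀ i, Integrable (fun ω => X ω i - μu i) P := fun i => (hX1 i).sub (integrable_const _)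
  have cY : ∀ i, Integrable (fun ω => Y ω i - μ i) P := fun i => (hY1 i).sub (integrable_const _)
  have centred : ∀ (Z : Ω → Fin d → ℝ) (c : Fin d → ℝ), (∀ i, Integrable (fun ω => Z ω i) P) →
      (∀ i j, Integrable (fun ω => Z ω i * Z ω j) P) →
      ∀ i j, Integrable (fun ω => (Z ω i - c i) * (Z ω j - c j)) P := by
    intro Z c h1 h2 i j
    have e : (fun ω => (Z ω i - c i) * (Z ω j - c j)) =
        fun ω => Z ω i * Z ω j - c j * Z ω i - c i * Z ω j + c i * c j := by
      funext ω; ring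
    rw [e]
    exact (((h2 i j).sub ((h1 i).const_mul _)).sub ((h1 j).const_mul _)).add (integrable_const _)
  have ind : ∀ i j, IndepFun (fun ω => X ω i - μu i) (fun ω => Y ω j - μ j) P := fun i j =>
    hIndep.comp (φ := fun v : Fin d → ℝ => v i - μu i) (ψ := fun v : Fin d → ℝ => v j - μ j)
      (by fun_prop) (by fun_prop)
  have mX : ∀ i, ∫ ω, (X ω i - μu i) ∂P = 0 := fun i => by
    rw [integral_sub (hX1 i) (integrable_const _), hXμ]; simp
  have mY : ∀ i, ∫ ω, (Y ω i - μ i) ∂P = 0 := fun i => by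
    rw [integral_sub (hY1 i) (integrable_const _), hYμ]; simp
  have cov := fun i j => integral_sub_mul_sub P (fun ω => X ω i - μu i) (fun ω => X ω j - μu j)
    (fun ω => Y ω i - μ i) (fun ω => Y ω j - μ j) (cX i) (cX j) (cY i) (cY j)
    (centred X μu hX1 hX2 i j) (centred Y μ hY1 hY2 i j) (ind i j) (ind j i).symm (mX i) (mY i)
  obtain ⟨hVint, hval⟩ := integral_euclNorm_mulVec_sq P V S⁻¹ (Au + A) (fun i j => (cov i j).1)
    (fun i j => by rw [Matrix.add_apply, hAu, hA]; exact (cov i j).2)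
  have hSdet : IsUnit S.det := hS.det_pos.ne'.isUnit
  have hSsymm : S⁻¹.transpose = S⁻¹ := by
    have := hS.inv.isHermitian.eq
    rwa [Matrix.conjTranspose_eq_transpose_of_trivial] at this
  have hTsymm : T.transpose = T := by
    have := hT.isHermitian.eq
    rwa [Matrix.conjTranspose_eq_transpose_of_trivial] at this
  have hmat : S⁻¹ * (Au + A) * S⁻¹.transpose = T * T.transpose := by
    rw [hSsymm, hTsymm, hTT, mul_add, add_mul, ← hSA, ← mul_assoc S⁻¹ S S,
      Matrix.nonsing_inv_mul S hSdet, one_mul, Matrix.mul_nonsing_inv S hSdet]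
  have htr : (T * T.transpose).trace = ∑ i, ∑ j, T i j ^ 2 := by
    simp [Matrix.trace, Matrix.mul_apply, sq]
  have hle : ∫ ω, euclNorm (S⁻¹.mulVec (V ω)) ^ 2 ∂P ≤ d * matOpNorm T ^ 2 := by
    rw [hval, hmat, htr]
    exact sum_sq_le_matOpNorm T
  have hc : 0 < euclNorm m - δ := sub_pos.2 hδ1
  have hsub : {ω | euclNorm (S⁻¹.mulVec (X ω - Y ω)) < δ} ⊆
      {ω | (euclNorm m - δ) ^ 2 ≤ euclNorm (S⁻¹.mulVec (V ω)) ^ 2} := by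
    intro ω hω
    simp only [Set.mem_ofPred_eq] at hω ⊢
    refine pow_le_pow_left₀ hc.le ?_ 2
    have e : S⁻¹.mulVec (V ω) = S⁻¹.mulVec (X ω - Y ω) - m := by
      rw [hm, ← Matrix.mulVec_sub]
      congr 1
      funext i
      simp only [hVdef, Pi.sub_apply]
      ring
    rw [e]
    linarith [euclNorm_sub_le m (S⁻¹.mulVec (X ω - Y ω))]
  have markov := mul_meas_ge_le_integral_of_nonneg (μ := P)
    (Filter.Eventually.of_forall fun ω => sq_nonneg (euclNorm (S⁻¹.mulVec (V ω)))) hVint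
    ((euclNorm m - δ) ^ 2)
  refine (measure_mono hsub).trans ?_
  rw [← ofReal_measureReal]
  refine ENNReal.ofReal_le_ofReal ?_
  rw [le_div_iff₀ (by positivity), mul_comm]
  exact markov.trans hle
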